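/- Let p be an odd prime, m even, q = p^m, Π perfect nonlinear with Π(0)=0, Π(cx) ≠ cΠ(x) for x ∈ 𝔽_q^*, c ∈ 𝔽_p\{0,1}, and satisfying either p = 3 or (Π⁻¹(0) = {0}, Π weakly regular, and a ↦ Π_a*(0) not surjective). Then C_Π is a 5-weight code with A_0 = 1, A_{(p−1)(p^{m−1}−p^{m/2−1})} = (p^m−1)(p^{m−1}+p^{m/2}−p^{m/2−1})/2, A_{(p−1)p^{m−1}−p^{m/2−1}} = (p^m−1)(p−1)(p^{m−1}+p^{m/2−1})/2, A_{(p−1)p^{m−1}} = p^m−1, A_{(p−1)p^{m−1}+p^{m/2−1}} = (p^m−1)(p−1)(p^{m−1}−p^{m/2−1})/2, A_{(p−1)(p^{m−1}+p^{m/2−1})} = (p^m−1)(p^{m−1}−p^{m/2}+p^{m/2−1})/2, and A_i = 0 otherwise; the minimum distance is (p−1)(p^{m−1}−p^{m/2−1}). -/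

import Mathlib

open Finset

/-- The code `C_Π = {(Tr(aΠ(x)+bx))_{x∈𝔽_q^*} : a,b ∈ 𝔽_q}` as a set of words indexed by
the nonzero elements of `𝔽_q`. -/
def CCode (p : ℕ) [Fact p.Prime] (F : Type*) [Field F] [Fintype F]
    [Algebra (ZMod p) F] (Pl : F → F) : Set ({x : F // x ≠ 0} → ZMod p) :=
  {g | ∃ a b : F, g = fun x => Algebra.trace (ZMod p) F (a * Pl x.1 + b * x.1)}

/-- Hamming weight of a word of length `q - 1`. -/
def wtC (p : ℕ) [Fact p.Prime] (F : Type*) [Field F] [Fintype F] [DecidableEq F]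
    (g : {x : F // x ≠ 0} → ZMod p) : ℕ :=
  (Finset.univ.filter (fun x : {x : F // x ≠ 0} => g x ≠ 0)).card

/-- Number of codewords of `C_Π` of Hamming weight `i`. -/
noncomputable def ACount (p : ℕ) [Fact p.Prime] (F : Type*) [Field F] [Fintype F]
    [DecidableEq F] [Algebra (ZMod p) F] (Pl : F → F) (i : ℕ) : ℕ :=
  Nat.card {g : {x : F // x ≠ 0} → ZMod p | g ∈ CCode p F Pl ∧ wtC p F g = i}

/-!
For `a ≠ 0` the Walsh sum of `x ↦ Tr (a Π(x))` at `b` is a sign times a `p`-th root of unity `χ k`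
times `√q`, and the weight of the word of `(a, b)` depends only on that sign and on whether `k = 0`.
Since the cyclotomic polynomial is irreducible, a rational relation between the values of `χ` forces
its coefficients to agree. Hence the first two moments of the Walsh sums, the second of which uses
`Π(-x) ≠ -Π(x)`, together with the vanishing of the sum of all signs, determine how many pairs have
each sign and `k = 0`. The signs sum to zero by the third moment if `p = 3`, and in the weakly
regular case because `∑ₐ εₐ χ (Π_a*(0)) = 0` has no term at the value missed by `a ↦ Π_a*(0)`.
-/

open Polynomial in
theorem eq_C_leadingCoeff_mul_cyclotomic {K : Type*} [Field K] [CharZero K] {n : ℕ}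
    (hn : 0 < n) {ζ : K} (hζ : IsPrimitiveRoot ζ n) {P : ℚ[X]} (hdeg : P.natDegree ≤ n.totient)
    (hP : aeval ζ P = 0) : P = C P.leadingCoeff * cyclotomic n ℚ := by
  have hdvd : cyclotomic n ℚ ∣ P := by
    rw [cyclotomic_eq_minpoly_rat hζ hn]
    exact minpoly.dvd ℚ ζ hP
  exact eq_leadingCoeff_mul_of_monic_of_dvd_of_natDegree_le (cyclotomic.monic n ℚ) hdvd
    (by rwa [natDegree_cyclotomic])

section PrimeOrderCharacter

variable {p : ℕ} [Fact p.Prime] {K : Type*} [Field K] {χ : AddChar (ZMod p) K}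

theorem addChar_eq_pow_val (χ : AddChar (ZMod p) K) (j : ZMod p) : χ j = χ 1 ^ j.val := by
  rw [← AddChar.map_nsmul_eq_pow, nsmul_one, ZMod.natCast_zmod_val]

theorem isPrimitiveRoot_addChar_one (hχ : χ ≠ 1) : IsPrimitiveRoot (χ 1) p := by
  have h_pow : χ 1 ^ p = 1 := by
    rw [← AddChar.map_nsmul_eq_pow, nsmul_one, ZMod.natCast_self, AddChar.map_zero_eq_one]
  have h_ne : χ 1 ≠ 1 := (AddChar.zmod_char_ne_one_iff p χ).1 hχ
  exact IsPrimitiveRoot.iff_orderOf.2 (orderOf_eq_prime h_pow h_ne)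

variable [CharZero K]

open Polynomial in
theorem eq_of_sum_mul_addChar_eq_zero (hχ : χ ≠ 1) {c : ZMod p → ℚ}
    (h : ∑ j, (c j : K) * χ j = 0) (i j : ZMod p) : c i = c j := by
  have hp : p.Prime := Fact.out
  let P : ℚ[X] := ∑ j : ZMod p, monomial j.val (c j)
  have h_coeff (j : ZMod p) : P.coeff j.val = c j := by
    simp [P, coeff_monomial, (ZMod.val_injective p).eq_iff]
  have h_deg : P.natDegree ≤ p.totient := by
    rw [Nat.totient_prime hp]
    exact natDegree_sum_le_of_forall_le _ _ fun j _ =>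
      (natDegree_monomial_le _).trans (Nat.le_sub_one_of_lt (ZMod.val_lt j))
  have h_root : aeval (χ 1) P = 0 := by
    simpa [P, aeval_monomial, ← addChar_eq_pow_val] using h
  have h_multiple := eq_C_leadingCoeff_mul_cyclotomic hp.pos (isPrimitiveRoot_addChar_one hχ)
    h_deg h_root
  have h_const (j : ZMod p) : c j = P.leadingCoeff := by
    rw [← h_coeff j, congrArg (coeff · j.val) h_multiple, coeff_C_mul, cyclotomic_prime]
    simp [coeff_X_pow, ZMod.val_lt j]
  rw [h_const i, h_const j]

theorem sum_sum_filter_mul {ι κ R : Type*} [CommSemiring R] [Fintype κ] [DecidableEq κ]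
    (S : Finset ι) (w : ι → R) (f : ι → κ) (g : κ → R) :
    ∑ j, (∑ i ∈ S with f i = j, w i) * g j = ∑ i ∈ S, w i * g (f i) := by
  rw [← sum_fiberwise S f]
  refine sum_congr rfl fun j _ => ?_
  rw [sum_mul]
  exact sum_congr rfl fun i hi => by rw [(mem_filter.1 hi).2]

theorem mul_sum_filter_eq_of_sum_mul_addChar_eq (hχ : χ ≠ 1) {ι : Type*} {S : Finset ι}
    {w : ι → ℤ} {f : ι → ZMod p} {R : ℤ} {k : ZMod p}
    (h : ∑ i ∈ S, (w i : K) * χ (f i) = R * χ k) (j : ZMod p) :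
    (p : ℤ) * ∑ i ∈ S with f i = j, w i = ∑ i ∈ S, w i - R + if j = k then p * R else 0 := by
  let excess (j : ZMod p) : ℤ := ∑ i ∈ S with f i = j, w i - if j = k then R else 0
  have h_zero : ∑ j, ((excess j : ℚ) : K) * χ j = 0 := by
    have h_fiber := sum_sum_filter_mul S (fun i => (w i : K)) f χ
    simp [excess, sub_mul, sum_sub_distrib, h_fiber, h, apply_ite (Rat.cast (K := K))]
  have h_const (i : ZMod p) : excess i = excess j :=
    mod_cast eq_of_sum_mul_addChar_eq_zero hχ h_zero i j
  have h_total : ∑ i, excess i = ∑ i ∈ S, w i - R := by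
    simp only [excess, sum_sub_distrib, sum_fiberwise, sum_ite_eq', mem_univ, if_true]
  rw [sum_congr rfl fun i _ => h_const i, sum_const, card_univ, ZMod.card, nsmul_eq_mul] at h_total
  grind

end PrimeOrderCharacter

section ExponentialSums

variable {F R : Type*} [Field F] [Fintype F] [CommRing R]

/-- The values `x ↦ f (x + a) - f x` of the derivatives of `f` in every nonzero direction `a`
are equidistributed. -/
def IsPerfectNonlinear (f : F → F) : Prop :=
  ∀ a, a ≠ 0 → Function.Bijective fun x => f (x + a) - f x

/-- The Walsh transform `∑ x, ψ (a f(x) + b x)` of the component functions of `f`, indexed by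
the pair `z = (a, b)`. -/
def walsh (ψ : AddChar F R) (f : F → F) (z : F × F) : R :=
  ∑ x, ψ (z.1 * f x + z.2 * x)

theorem IsPerfectNonlinear.walsh_mul_walsh_inv [IsDomain R] {ψ : AddChar F R} {f : F → F}
    (hf : IsPerfectNonlinear f) (hψ : ψ.IsPrimitive) {z : F × F} (hz : z.1 ≠ 0) :
    walsh ψ f z * walsh ψ⁻¹ f z = Fintype.card F := by
  classical
  have h_shift (y : F) : ∑ x, ψ (z.1 * f x + z.2 * x) * ψ⁻¹ (z.1 * f y + z.2 * y)
      = ∑ d, ψ (z.2 * d) * ψ ((f (y + d) - f y) * z.1) := by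
    refine (Fintype.sum_equiv (Equiv.addLeft y) _ _ fun d => ?_).symm
    rw [AddChar.inv_apply, ← AddChar.map_add_eq_mul, ← AddChar.map_add_eq_mul,
      Equiv.coe_addLeft]
    congr 1
    ring
  have h_deriv (d : F) (hd : d ≠ 0) : ∑ y, ψ ((f (y + d) - f y) * z.1) = 0 := by
    rw [Fintype.sum_bijective _ (hf d hd) _ (fun x => ψ (x * z.1)) fun _ => rfl,
      AddChar.sum_mulShift _ hψ, if_neg hz, Nat.cast_zero]
  rw [walsh, walsh, sum_mul_sum, sum_comm, sum_congr rfl fun y _ => h_shift y, sum_comm]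
  simp only [← mul_sum]
  rw [sum_eq_single 0 (fun d _ hd => by rw [h_deriv d hd, mul_zero]) (by simp)]
  simp

theorem sum_walsh_snd_zero [IsDomain R] {ψ : AddChar F R} {f : F → F} (hψ : ψ.IsPrimitive)
    (h0 : f 0 = 0) (h_zero : ∀ x, f x = 0 → x = 0) :
    ∑ a, walsh ψ f (a, 0) = Fintype.card F := by
  classical
  simp only [walsh, zero_mul, add_zero]
  rw [sum_comm, sum_eq_single 0 (fun x _ hx => ?_) (by simp)]
  · simp [h0]
  · rw [AddChar.sum_mulShift _ hψ, if_neg fun h => hx (h_zero x h), Nat.cast_zero]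

variable [DecidableEq F]

theorem sum_fst_ne_zero {M : Type*} [AddCommGroup M] (G : F × F → M) :
    ∑ z with z.1 ≠ 0, G z = ∑ z, G z - ∑ b, G (0, b) := by
  rw [eq_sub_iff_add_eq, ← sum_filter_add_sum_filter_not univ (fun z : F × F => z.1 ≠ 0)]
  congr 1
  have h_fiber : ({z : F × F | ¬z.1 ≠ 0} : Finset (F × F)) = {0} ×ˢ univ := by
    ext ⟨a, b⟩
    simp [eq_comm]
  rw [h_fiber, sum_product, sum_singleton]

theorem card_fst_ne_zero :
    (#{z : F × F | z.1 ≠ 0} : ℤ) = (Fintype.card F - 1) * Fintype.card F := by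
  have h := sum_fst_ne_zero fun _ : F × F => (1 : ℤ)
  simp only [sum_const, nsmul_eq_mul, mul_one, card_univ, Fintype.card_prod] at h
  rw [h]
  push_cast
  ring

variable [IsDomain R] {ψ : AddChar F R} (f : F → F)

theorem sum_addChar_mul_add_mul (hψ : ψ.IsPrimitive) (u v : F) :
    ∑ z : F × F, ψ (z.1 * u + z.2 * v) = if u = 0 ∧ v = 0 then (Fintype.card F : R) ^ 2 else 0 := by
  simp only [Fintype.sum_prod_type, AddChar.map_add_eq_mul, ← mul_sum, ← sum_mul,
    AddChar.sum_mulShift _ hψ]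
  split_ifs <;> simp_all [sq]

theorem addChar_sum {ι A M : Type*} [AddCommMonoid A] [CommMonoid M] (φ : AddChar A M)
    (s : Finset ι) (g : ι → A) : φ (∑ i ∈ s, g i) = ∏ i ∈ s, φ (g i) :=
  map_prod φ.toMonoidHom (fun i => Multiplicative.ofAdd (g i)) s

theorem sum_walsh_pow (hψ : ψ.IsPrimitive) (n : ℕ) :
    ∑ z, walsh ψ f z ^ n
      = (Fintype.card F : R) ^ 2 * #{t : Fin n → F | ∑ i, f (t i) = 0 ∧ ∑ i, t i = 0} := by
  have h_expand (z : F × F) : walsh ψ f z ^ n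
      = ∑ t : Fin n → F, ψ (z.1 * ∑ i, f (t i) + z.2 * ∑ i, t i) := by
    simp only [walsh, Fintype.sum_pow, mul_sum, ← sum_add_distrib, addChar_sum]
  simp only [h_expand]
  rw [sum_comm]
  simp only [sum_addChar_mul_add_mul hψ, ← sum_filter, sum_const, nsmul_eq_mul]
  rw [mul_comm]

theorem walsh_zero_left (hψ : ψ.IsPrimitive) (b : F) :
    walsh ψ f (0, b) = if b = 0 then (Fintype.card F : R) else 0 := by
  simp only [walsh, zero_mul, zero_add, mul_comm b, AddChar.sum_mulShift b hψ]
  split_ifs <;> simp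

theorem sum_walsh_pow_fst_ne_zero (hψ : ψ.IsPrimitive) {n : ℕ} (hn : n ≠ 0) :
    ∑ z with z.1 ≠ 0, walsh ψ f z ^ n
      = (Fintype.card F : R) ^ 2 * #{t : Fin n → F | ∑ i, f (t i) = 0 ∧ ∑ i, t i = 0}
        - (Fintype.card F : R) ^ n := by
  rw [sum_fst_ne_zero, sum_walsh_pow f hψ]
  simp [walsh_zero_left f hψ, hn]

variable {f}

theorem sum_walsh_fst_ne_zero (hψ : ψ.IsPrimitive) (h0 : f 0 = 0) :
    ∑ z with z.1 ≠ 0, walsh ψ f z = (Fintype.card F : R) ^ 2 - Fintype.card F := by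
  have h_sol : ({t : Fin 1 → F | ∑ i, f (t i) = 0 ∧ ∑ i, t i = 0} : Finset _) = {0} := by
    ext t
    simp only [univ_unique, sum_singleton, mem_filter_univ, mem_singleton, funext_iff,
      Unique.forall_iff, Pi.zero_apply, and_iff_right_iff_imp]
    intro ht
    rw [ht, h0]
  have h := sum_walsh_pow_fst_ne_zero f hψ one_ne_zero
  rw [h_sol] at h
  simpa using h

theorem sum_walsh_sq_fst_ne_zero (hψ : ψ.IsPrimitive) (h0 : f 0 = 0)
    (hneg : ∀ x, x ≠ 0 → f (-x) ≠ -f x) :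
    ∑ z with z.1 ≠ 0, walsh ψ f z ^ 2 = 0 := by
  have h_sol : ({t : Fin 2 → F | ∑ i, f (t i) = 0 ∧ ∑ i, t i = 0} : Finset _) = {0} := by
    ext t
    simp only [Fin.sum_univ_two, mem_filter_univ, mem_singleton, funext_iff, Fin.forall_fin_two,
      Pi.zero_apply]
    constructor
    · rintro ⟨hf, ht⟩
      have h_neg : t 0 = -t 1 := eq_neg_of_add_eq_zero_left ht
      have h_one : t 1 = 0 := by
        by_contra h
        exact hneg _ h (h_neg ▸ eq_neg_of_add_eq_zero_left hf)
      exact ⟨by rw [h_neg, h_one, neg_zero], h_one⟩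
    · rintro ⟨h₀, h₁⟩
      simp [h₀, h₁, h0]
  rw [sum_walsh_pow_fst_ne_zero f hψ two_ne_zero, h_sol]
  simp

theorem IsPerfectNonlinear.sum_walsh_cube_fst_ne_zero [CharP F 3] (hf : IsPerfectNonlinear f)
    (hψ : ψ.IsPrimitive) :
    ∑ z with z.1 ≠ 0, walsh ψ f z ^ 3 = 0 := by
  have h3 : (3 : F) = 0 := CharP.cast_eq_zero F 3
  have h_sol : ({t : Fin 3 → F | ∑ i, f (t i) = 0 ∧ ∑ i, t i = 0} : Finset _)
      = univ.image (Function.const (Fin 3)) := by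
    ext t
    simp only [Fin.sum_univ_three, mem_filter_univ, mem_image, mem_univ, true_and]
    constructor
    · rintro ⟨hft, ht⟩
      -- `t` is an arithmetic progression, along which `f` has equal consecutive increments.
      have h_two : t 2 = t 1 + (t 1 - t 0) := by linear_combination ht - t 1 * h3
      have h_one : t 1 = t 0 := by
        by_contra h
        refine h ((hf (t 1 - t 0) (sub_ne_zero.2 h)).1 ?_)
        simp only [add_sub_cancel, ← h_two]
        linear_combination hft - f (t 1) * h3
      refine ⟨t 0, funext fun i => ?_⟩
      fin_cases i <;> simp [h_two, h_one]
    · rintro ⟨w, rfl⟩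
      simp only [Function.const_apply]
      constructor
      · linear_combination f w * h3
      · linear_combination w * h3
  rw [sum_walsh_pow_fst_ne_zero f hψ three_ne_zero, h_sol,
    card_image_of_injective _ (Function.const_injective), card_univ]
  ring

end ExponentialSums

section Trace

variable {p : ℕ} [Fact p.Prime] {K : Type*} [Field K]

/-- The additive character `x ↦ χ (Tr x)` of `F` attached to a character `χ` of the prime field. -/
noncomputable def traceChar (F : Type*) [Field F] [Algebra (ZMod p) F]
    (χ : AddChar (ZMod p) K) : AddChar F K :=
  χ.compAddMonoidHom (Algebra.trace (ZMod p) F).toAddMonoidHom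

variable {F : Type*} [Field F] [Algebra (ZMod p) F] {χ : AddChar (ZMod p) K}

theorem traceChar_apply (x : F) : traceChar F χ x = χ (Algebra.trace (ZMod p) F x) := rfl

theorem isPrimitive_traceChar [Finite F] (hχ : χ ≠ 1) : (traceChar F χ).IsPrimitive := by
  refine AddChar.IsPrimitive.of_ne_one fun h => hχ ?_
  ext j
  obtain ⟨x, rfl⟩ := Algebra.trace_surjective (ZMod p) F j
  rw [← traceChar_apply, h, AddChar.one_apply, AddChar.one_apply]

end Trace

/- Descent on `n`: if `9 ∣ u² - uv + v²` then `3 ∣ u` and `3 ∣ v`. In `ℤ[ω]` the conclusion says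
that `u + vω` is one of `±3ⁿ`, `±3ⁿω`, `±3ⁿω²`. -/
theorem eq_of_sq_sub_mul_add_sq_eq_nine_pow (n : ℕ) {u v : ℤ}
    (h : u ^ 2 - u * v + v ^ 2 = 9 ^ n) :
    ∃ e : ℤ, (e = 1 ∨ e = -1) ∧ ((u = e * 3 ^ n ∧ v = 0) ∨ (u = 0 ∧ v = e * 3 ^ n) ∨
      (u = -e * 3 ^ n ∧ v = -e * 3 ^ n)) := by
  induction n generalizing u v with
  | zero =>
    have hu : |u| ≤ 1 := abs_le_one_iff_mul_self_le_one.2 (by nlinarith [sq_nonneg (2 * v - u)])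
    have hv : |v| ≤ 1 := abs_le_one_iff_mul_self_le_one.2 (by nlinarith [sq_nonneg (2 * u - v)])
    rw [abs_le] at hu hv
    obtain ⟨hu₁, hu₂⟩ := hu
    obtain ⟨hv₁, hv₂⟩ := hv
    interval_cases u <;> interval_cases v <;> simp at h ⊢
  | succ n ih =>
    rw [pow_succ 9] at h
    obtain ⟨w, hw⟩ : 3 ∣ u + v :=
      Int.prime_three.dvd_of_dvd_pow (n := 2) ⟨3 * 9 ^ n + u * v, by linear_combination h⟩
    obtain rfl : v = 3 * w - u := by linear_combination hw
    obtain ⟨z, rfl⟩ : 3 ∣ u :=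
      Int.prime_three.dvd_of_dvd_pow (n := 2) ⟨9 ^ n - w ^ 2 + w * u, by linarith⟩
    obtain ⟨e, he, h_cases⟩ := ih (u := z) (v := w - z) (by linarith)
    refine ⟨e, he, h_cases.imp ?_ (Or.imp ?_ ?_)⟩ <;> grind

theorem exists_sum_mul_addChar_eq_of_mul_eq_nine_pow {K : Type*} [Field K] [CharZero K]
    {χ : AddChar (ZMod 3) K} (hχ : χ ≠ 1) {n : ℕ} {c : ZMod 3 → ℤ}
    (h : (∑ j, (c j : K) * χ j) * ∑ j, (c j : K) * χ⁻¹ j = 9 ^ n) :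
    ∃ (e : ℤ) (k : ZMod 3), (e = 1 ∨ e = -1) ∧ ∑ j, (c j : K) * χ j = e * χ k * 3 ^ n := by
  have h_sum (g : ZMod 3 → K) : ∑ j, g j = g 0 + g 1 + g 2 := Fin.sum_univ_three g
  have h_two : χ 2 = -1 - χ 1 := by
    have h_zero := AddChar.sum_eq_zero_of_ne_one hχ
    rw [h_sum, AddChar.map_zero_eq_one] at h_zero
    linear_combination h_zero
  have h_norm : χ 1 * χ 2 = 1 := by
    rw [← AddChar.map_add_eq_mul, show (1 + 2 : ZMod 3) = 0 from rfl, AddChar.map_zero_eq_one]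
  have h_eval : ∑ j, (c j : K) * χ j = (c 0 - c 2) + (c 1 - c 2) * χ 1 := by
    rw [h_sum, AddChar.map_zero_eq_one, h_two]
    ring
  have h_eval_inv : ∑ j, (c j : K) * χ⁻¹ j = (c 0 - c 2) + (c 1 - c 2) * χ 2 := by
    simp only [h_sum, AddChar.inv_apply, neg_zero, AddChar.map_zero_eq_one,
      show (-1 : ZMod 3) = 2 from rfl, show (-2 : ZMod 3) = 1 from rfl]
    linear_combination c 2 * h_two
  have h_form : (c 0 - c 2) ^ 2 - (c 0 - c 2) * (c 1 - c 2) + (c 1 - c 2) ^ 2 = 9 ^ n := by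
    rw [h_eval, h_eval_inv] at h
    have : ((c 0 : K) - c 2) ^ 2 - (c 0 - c 2) * (c 1 - c 2) + (c 1 - c 2) ^ 2 = 9 ^ n := by
      linear_combination h - (c 1 - c 2 : K) ^ 2 * h_norm - (c 0 - c 2 : K) * (c 1 - c 2) * h_two
    exact_mod_cast this
  obtain ⟨e, he, h_cases⟩ := eq_of_sq_sub_mul_add_sq_eq_nine_pow n h_form
  rw [h_eval, ← Int.cast_sub, ← Int.cast_sub]
  rcases h_cases with ⟨hu, hv⟩ | ⟨hu, hv⟩ | ⟨hu, hv⟩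
  · exact ⟨e, 0, he, by simp [hu, hv]⟩
  · exact ⟨e, 1, he, by simp [hu, hv, mul_right_comm]⟩
  · refine ⟨e, 2, he, ?_⟩
    rw [hu, hv, h_two]
    push_cast
    ring

section Signs

variable {ι : Type*} {T : Finset ι} {e : ι → ℤ}

theorem two_mul_card_filter_sign (he : ∀ i ∈ T, e i = 1 ∨ e i = -1) {δ : ℤ}
    (hδ : δ = 1 ∨ δ = -1) : 2 * (#{i ∈ T | e i = δ} : ℤ) = #T + δ * ∑ i ∈ T, e i := by
  have h_ind : ∀ i ∈ T, (2 * if e i = δ then 1 else 0) = 1 + δ * e i := by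
    intro i hi
    rcases he i hi with h | h <;> rcases hδ with rfl | rfl <;> simp [h]
  rw [card_filter, Nat.cast_sum, mul_sum]
  simp only [Nat.cast_ite, Nat.cast_one, Nat.cast_zero]
  rw [sum_congr rfl h_ind, sum_add_distrib, mul_sum]
  simp

variable {p : ℕ} [Fact p.Prime] {K : Type*} [Field K] [CharZero K] {χ : AddChar (ZMod p) K}
  {k : ι → ZMod p}

theorem mul_card_filter_eq_zero (hp : p ≠ 2) (hχ : χ ≠ 1) (h : ∑ i ∈ T, χ (k i) ^ 2 = 0) :
    (p : ℤ) * #{i ∈ T | k i = 0} = #T := by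
  have h_two : (2 : ZMod p) ≠ 0 := Ring.two_ne_zero (by rwa [ZMod.ringChar_zmod_n])
  have h_equi := mul_sum_filter_eq_of_sum_mul_addChar_eq hχ (S := T) (w := 1)
    (f := fun i => 2 * k i) (R := 0) (k := 0)
    (by simpa [two_mul, AddChar.map_add_eq_mul, sq] using h) 0
  simpa [h_two] using h_equi

variable {R : ℤ} {δ : ℤ}

theorem two_mul_card_filter_sign_eq_zero (hp : p ≠ 2) (hχ : χ ≠ 1)
    (he : ∀ i ∈ T, e i = 1 ∨ e i = -1) (h_sum : ∑ i ∈ T, e i = 0)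
    (h_fst : ∑ i ∈ T, (e i : K) * χ (k i) = R) (h_sq : ∑ i ∈ T, χ (k i) ^ 2 = 0)
    (hδ : δ = 1 ∨ δ = -1) :
    2 * p * (#{i ∈ T | e i = δ ∧ k i = 0} : ℤ) = #T + δ * ((p - 1) * R) := by
  have h_signs := two_mul_card_filter_sign (T := {i ∈ T | k i = 0})
    (fun i hi => he i (mem_filter.1 hi).1) hδ
  have h_card := mul_card_filter_eq_zero hp hχ h_sq
  have h_equi := mul_sum_filter_eq_of_sum_mul_addChar_eq hχ (k := 0) (by simpa using h_fst) 0
  rw [h_sum, if_pos rfl] at h_equi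
  rw [filter_filter, filter_congr fun i _ => and_comm] at h_signs
  linear_combination p * h_signs + h_card + δ * h_equi

theorem two_mul_card_filter_sign_ne_zero (hp : p ≠ 2) (hχ : χ ≠ 1)
    (he : ∀ i ∈ T, e i = 1 ∨ e i = -1) (h_sum : ∑ i ∈ T, e i = 0)
    (h_fst : ∑ i ∈ T, (e i : K) * χ (k i) = R) (h_sq : ∑ i ∈ T, χ (k i) ^ 2 = 0)
    (hδ : δ = 1 ∨ δ = -1) :
    2 * p * (#{i ∈ T | e i = δ ∧ k i ≠ 0} : ℤ) = (p - 1) * (#T - δ * R) := by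
  have h_signs := two_mul_card_filter_sign he hδ
  have h_zero := two_mul_card_filter_sign_eq_zero hp hχ he h_sum h_fst h_sq hδ
  have h_split := card_filter_add_card_filter_not (s := {i ∈ T | e i = δ}) (fun i => k i = 0)
  simp only [filter_filter] at h_split
  zify at h_split
  rw [h_sum] at h_signs
  linear_combination 2 * p * h_split - h_zero + p * h_signs

end Signs

section BalancedSpectrum

variable {p : ℕ} [Fact p.Prime] {K : Type*} [Field K] {F : Type*} [Field F] [Fintype F]
  [Algebra (ZMod p) F] {χ : AddChar (ZMod p) K} {f : F → F} {s : ℕ}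
  {e : F × F → ℤ} {k : F × F → ZMod p}

theorem walsh_traceChar (χ : AddChar (ZMod p) K) (f : F → F) (z : F × F) :
    walsh (traceChar F χ) f z = ∑ j, (#{x | Algebra.trace (ZMod p) F (z.1 * f x + z.2 * x) = j} : K)
      * χ j := by
  have h := sum_sum_filter_mul univ (fun _ : F => (1 : K))
    (fun x => Algebra.trace (ZMod p) F (z.1 * f x + z.2 * x)) χ
  simpa [walsh, traceChar_apply] using h.symm

theorem IsPerfectNonlinear.exists_walsh_eq_of_three [CharZero K] [Algebra (ZMod 3) F]
    {χ : AddChar (ZMod 3) K} (hf : IsPerfectNonlinear f) (hχ : χ ≠ 1) {n : ℕ}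
    (hq : Fintype.card F = 9 ^ n) {z : F × F} (hz : z.1 ≠ 0) :
    ∃ (e : ℤ) (k : ZMod 3), (e = 1 ∨ e = -1) ∧ walsh (traceChar F χ) f z = e * χ k * 3 ^ n := by
  have h_norm := hf.walsh_mul_walsh_inv (isPrimitive_traceChar hχ) hz
  have h_inv : (traceChar F χ)⁻¹ = traceChar F χ⁻¹ := by
    ext x
    simp only [AddChar.inv_apply, traceChar_apply, map_neg]
  rw [h_inv, walsh_traceChar, walsh_traceChar, hq] at h_norm
  rw [walsh_traceChar]
  exact_mod_cast exists_sum_mul_addChar_eq_of_mul_eq_nine_pow hχ (n := n)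
    (c := fun j => #{x | Algebra.trace (ZMod 3) F (z.1 * f x + z.2 * x) = j})
    (mod_cast h_norm)

variable [DecidableEq F]

/-- The field `F` has order `(p * s) ^ 2`, and the Walsh transform of `f` at every pair `z = (a, b)`
with `a ≠ 0` is its square root `p * s` times a sign `e z` and a root of unity `χ (k z)`, the signs
summing to zero. -/
structure IsBalancedSpectrum (χ : AddChar (ZMod p) K) (f : F → F) (s : ℕ) (e : F × F → ℤ)
    (k : F × F → ZMod p) : Prop where
  card_eq : Fintype.card F = (p * s) ^ 2
  sign : ∀ z, z.1 ≠ 0 → e z = 1 ∨ e z = -1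
  walsh_eq : ∀ z, z.1 ≠ 0 → walsh (traceChar F χ) f z = e z * χ (k z) * (p * s)
  sum_sign : ∑ z with z.1 ≠ 0, e z = 0

theorem IsBalancedSpectrum.pos (hB : IsBalancedSpectrum χ f s e k) : 0 < s := by
  refine Nat.pos_of_ne_zero fun hs => Fintype.card_ne_zero (α := F) ?_
  rw [hB.card_eq, hs, mul_zero, zero_pow two_ne_zero]

theorem IsBalancedSpectrum.lt_sub_one_mul (hB : IsBalancedSpectrum χ f s e k) (hp : p ≠ 2) :
    0 < (s : ℤ) ∧ (s : ℤ) < (p - 1) * s ∧ ((p : ℤ) - 1) * s < (p - 1) * (p * s ^ 2) := by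
  have hp3 : (3 : ℤ) ≤ p := mod_cast (Fact.out : p.Prime).two_le.lt_of_ne hp.symm
  have hs : (1 : ℤ) ≤ s := mod_cast hB.pos
  refine ⟨hs, by nlinarith, mul_lt_mul_of_pos_left ?_ (by linarith)⟩
  nlinarith

variable [CharZero K]

theorem IsPerfectNonlinear.exists_isBalancedSpectrum_of_three
    [Algebra (ZMod 3) F] {χ : AddChar (ZMod 3) K} (hf : IsPerfectNonlinear f) (hχ : χ ≠ 1) {t : ℕ}
    (hq : Fintype.card F = 9 ^ (t + 1)) : ∃ e k, IsBalancedSpectrum χ f (3 ^ t) e k := by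
  have h_values (z : F × F) : ∃ (e : ℤ) (k : ZMod 3), z.1 ≠ 0 →
      (e = 1 ∨ e = -1) ∧ walsh (traceChar F χ) f z = e * χ k * 3 ^ (t + 1) := by
    by_cases hz : z.1 = 0
    · exact ⟨0, 0, fun h => absurd hz h⟩
    · obtain ⟨e, k, h⟩ := hf.exists_walsh_eq_of_three hχ hq hz
      exact ⟨e, k, fun _ => h⟩
  choose e k h_walsh using h_values
  have : CharP F 3 := charP_of_injective_algebraMap (algebraMap (ZMod 3) F).injective 3
  have h_cube := hf.sum_walsh_cube_fst_ne_zero (isPrimitive_traceChar hχ)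
  have h_sign : ∀ z ∈ ({z | z.1 ≠ 0} : Finset (F × F)),
      walsh (traceChar F χ) f z ^ 3 = e z * (3 ^ (t + 1)) ^ 3 := by
    intro z hz
    obtain ⟨he, h_eq⟩ := h_walsh z (mem_filter.1 hz).2
    have h_unit : χ (k z) ^ 3 = 1 := by
      rw [← AddChar.map_nsmul_eq_pow, ZModModule.char_nsmul_eq_zero, AddChar.map_zero_eq_one]
    rw [h_eq, mul_pow, mul_pow, h_unit, mul_one]
    rcases he with h | h <;> simp [h, Odd.neg_one_pow (n := 3) (by decide)]
  rw [sum_congr rfl h_sign, ← sum_mul, mul_eq_zero,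
    or_iff_left (pow_ne_zero _ (pow_ne_zero _ three_ne_zero))] at h_cube
  have h_card : Fintype.card F = (3 * 3 ^ t) ^ 2 := by
    rw [hq, ← pow_succ', pow_right_comm]
    norm_num
  exact ⟨e, k, h_card, fun z hz => (h_walsh z hz).1,
    fun z hz => by rw [(h_walsh z hz).2]; push_cast; ring, mod_cast h_cube⟩

theorem isBalancedSpectrum_of_weaklyRegular (hχ : χ ≠ 1)
    (hq : Fintype.card F = (p * s) ^ 2) (h0 : f 0 = 0)
    (h_zero : ∀ x, f x = 0 → x = 0) {ε : F → ℤ} (hε : ∀ a, a ≠ 0 → ε a = 1 ∨ ε a = -1)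
    {D : F → F → ZMod p}
    (h_walsh : ∀ a, a ≠ 0 → ∀ b, walsh (traceChar F χ) f (a, b) = ε a * χ (D a b) * (p * s))
    {r : ZMod p} (hr : ∀ a, a ≠ 0 → D a 0 ≠ r) :
    IsBalancedSpectrum χ f s (fun z => ε z.1) (fun z => D z.1 z.2) := by
  have hψ : (traceChar F χ).IsPrimitive := isPrimitive_traceChar hχ
  have h_dual : ∑ a ∈ univ.erase 0, (ε a : K) * χ (D a 0) = 0 := by
    have h_sum := sum_walsh_snd_zero hψ h0 h_zero
    rw [← add_sum_erase _ _ (mem_univ 0), walsh_zero_left f hψ, if_pos rfl, add_eq_left,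
      sum_congr rfl fun a ha => h_walsh a (ne_of_mem_erase ha) 0, ← sum_mul] at h_sum
    exact (mul_eq_zero.1 h_sum).resolve_right <| mod_cast
      pow_ne_zero_iff two_ne_zero |>.1 (hq ▸ Fintype.card_ne_zero)
  -- The signs have the same sum over every fibre of the dual, and the fibre over `r` is empty.
  have h_equi := mul_sum_filter_eq_of_sum_mul_addChar_eq hχ (R := 0) (k := 0)
    (h_dual.trans (by simp)) r
  rw [filter_eq_empty_iff.2 fun a ha => hr a (ne_of_mem_erase ha)] at h_equi
  have h_total : ∑ a, ε a - ε 0 = 0 := by simpa using h_equi.symm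
  refine ⟨hq, fun z hz => hε z.1 hz, fun z hz => h_walsh z.1 hz z.2, ?_⟩
  rw [sum_fst_ne_zero, Fintype.sum_prod_type]
  simp only [sum_const, ← smul_sum, ← smul_sub, h_total, smul_zero]

namespace IsBalancedSpectrum

theorem prime_mul_ne_zero (hB : IsBalancedSpectrum χ f s e k) : ((p : K) * s) ≠ 0 :=
  mod_cast mul_ne_zero (NeZero.ne p) hB.pos.ne'

theorem sum_mul_addChar (hB : IsBalancedSpectrum χ f s e k) (hχ : χ ≠ 1) (h0 : f 0 = 0) :
    ∑ z with z.1 ≠ 0, (e z : K) * χ (k z) = (((p * s) ^ 2 - 1) * (p * s) : ℤ) := by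
  have h := sum_walsh_fst_ne_zero (isPrimitive_traceChar hχ) h0
  rw [sum_congr rfl fun z hz => hB.walsh_eq z (mem_filter.1 hz).2, ← sum_mul, hB.card_eq] at h
  refine mul_right_cancel₀ hB.prime_mul_ne_zero (h.trans ?_)
  push_cast
  ring

theorem sum_addChar_sq (hB : IsBalancedSpectrum χ f s e k) (hχ : χ ≠ 1) (h0 : f 0 = 0)
    (hneg : ∀ x, x ≠ 0 → f (-x) ≠ -f x) : ∑ z with z.1 ≠ 0, χ (k z) ^ 2 = 0 := by
  have h := sum_walsh_sq_fst_ne_zero (isPrimitive_traceChar hχ) h0 hneg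
  have h_walsh_sq : ∀ z ∈ ({z | z.1 ≠ 0} : Finset (F × F)),
      walsh (traceChar F χ) f z ^ 2 = χ (k z) ^ 2 * (p * s) ^ 2 := by
    intro z hz
    have hz' := (mem_filter.1 hz).2
    rw [hB.walsh_eq z hz']
    rcases hB.sign z hz' with h | h <;> rw [h] <;> push_cast <;> ring
  rw [sum_congr rfl h_walsh_sq, ← sum_mul] at h
  exact (mul_eq_zero.1 h).resolve_right (pow_ne_zero 2 hB.prime_mul_ne_zero)

variable {δ : ℤ}

theorem two_mul_card_eq_zero (hB : IsBalancedSpectrum χ f s e k) (hp : p ≠ 2) (hχ : χ ≠ 1)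
    (h0 : f 0 = 0) (hneg : ∀ x, x ≠ 0 → f (-x) ≠ -f x) (hδ : δ = 1 ∨ δ = -1) :
    2 * (#{z | z.1 ≠ 0 ∧ e z = δ ∧ k z = 0} : ℤ)
      = ((p * s) ^ 2 - 1) * (p * s ^ 2 + δ * ((p - 1) * s)) := by
  have h := two_mul_card_filter_sign_eq_zero hp hχ
    (fun z hz => hB.sign z (mem_filter.1 hz).2) hB.sum_sign (hB.sum_mul_addChar hχ h0)
    (hB.sum_addChar_sq hχ h0 hneg) hδ
  rw [filter_filter, card_fst_ne_zero, hB.card_eq] at h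
  refine mul_left_cancel₀ (Nat.cast_ne_zero.2 (NeZero.ne p)) (Eq.trans ?_ (h.trans ?_))
  · ring
  · push_cast
    ring

theorem two_mul_card_ne_zero (hB : IsBalancedSpectrum χ f s e k) (hp : p ≠ 2) (hχ : χ ≠ 1)
    (h0 : f 0 = 0) (hneg : ∀ x, x ≠ 0 → f (-x) ≠ -f x) (hδ : δ = 1 ∨ δ = -1) :
    2 * (#{z | z.1 ≠ 0 ∧ e z = δ ∧ k z ≠ 0} : ℤ)
      = ((p * s) ^ 2 - 1) * (p - 1) * (p * s ^ 2 - δ * s) := by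
  have h := two_mul_card_filter_sign_ne_zero hp hχ
    (fun z hz => hB.sign z (mem_filter.1 hz).2) hB.sum_sign (hB.sum_mul_addChar hχ h0)
    (hB.sum_addChar_sq hχ h0 hneg) hδ
  rw [filter_filter, card_fst_ne_zero, hB.card_eq] at h
  refine mul_left_cancel₀ (Nat.cast_ne_zero.2 (NeZero.ne p)) (Eq.trans ?_ (h.trans ?_))
  · ring
  · push_cast
    ring

end IsBalancedSpectrum

end BalancedSpectrum

section Codewords

variable {p : ℕ} [Fact p.Prime] {F : Type*} [Field F]

theorem wtC_eq_zero [Fintype F] [DecidableEq F] {g : {x : F // x ≠ 0} → ZMod p} :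
    wtC p F g = 0 ↔ g = 0 :=
  hammingNorm_eq_zero

theorem wtC_restrict [Fintype F] [DecidableEq F] {g : F → ZMod p} (hg : g 0 = 0) :
    wtC p F (fun x => g x) = #{x | g x ≠ 0} := by
  have h_supp : ({x | g x ≠ 0} : Finset F) = ({x | g x ≠ 0} : Finset {x : F // x ≠ 0}).map
      (Function.Embedding.subtype _) := by
    ext x
    simp only [mem_filter_univ, mem_map, Function.Embedding.subtype_apply, Subtype.exists,
      exists_and_left, exists_prop, exists_eq_right_right, iff_self_and]
    rintro hx rfl
    exact hx hg
  rw [h_supp, card_map, wtC]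

variable [Algebra (ZMod p) F] {f : F → F}

/-- The codeword `(Tr (a f(x) + b x))_{x ≠ 0}`, as an additive function of the pair `(a, b)`. -/
noncomputable def codeword (p : ℕ) [Fact p.Prime] [Algebra (ZMod p) F] (f : F → F) :
    F × F →+ ({x : F // x ≠ 0} → ZMod p) :=
  AddMonoidHom.mk' (fun z x => Algebra.trace (ZMod p) F (z.1 * f x + z.2 * x)) fun z z' => by
    ext x
    simp only [Pi.add_apply, ← map_add, Prod.fst_add, Prod.snd_add]
    congr 1
    ring

variable [Fintype F]

theorem CCode_eq_range_codeword : CCode p F f = Set.range (codeword p f) := by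
  ext g
  constructor
  · rintro ⟨a, b, rfl⟩
    exact ⟨(a, b), rfl⟩
  · rintro ⟨z, rfl⟩
    exact ⟨z.1, z.2, rfl⟩

variable [DecidableEq F]

theorem ACount_eq_card_codeword (h : ∀ z, codeword p f z = 0 → z = 0) (i : ℕ) :
    ACount p F f i = #{z | wtC p F (codeword p f z) = i} := by
  have h_inj : Function.Injective (codeword p f) := (injective_iff_map_eq_zero _).2 h
  have h_image : {g | g ∈ CCode p F f ∧ wtC p F g = i}
      = codeword p f '' ({z | wtC p F (codeword p f z) = i} : Finset (F × F)) := by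
    rw [CCode_eq_range_codeword]
    ext g
    constructor
    · rintro ⟨⟨z, rfl⟩, hz⟩
      exact ⟨z, by simpa using hz, rfl⟩
    · rintro ⟨z, hz, rfl⟩
      exact ⟨⟨z, rfl⟩, by simpa using hz⟩
  rw [ACount, h_image, Nat.card_image_of_injective h_inj, Nat.card_eq_card_toFinset, toFinset_coe]

variable {K : Type*} [Field K] [CharZero K] {χ : AddChar (ZMod p) K}

theorem prime_mul_wtC_codeword (hχ : χ ≠ 1) {z : F × F} (hz : z.1 * f 0 = 0) {R : ℤ}
    {k : ZMod p} (h : walsh (traceChar F χ) f z = R * χ k) :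
    (p : ℤ) * wtC p F (codeword p f z)
      = (p - 1) * Fintype.card F + R - if k = 0 then p * R else 0 := by
  let g (x : F) : ZMod p := Algebra.trace (ZMod p) F (z.1 * f x + z.2 * x)
  have h_wt : wtC p F (codeword p f z) = #{x | g x ≠ 0} :=
    wtC_restrict (g := g) (by simp [g, hz])
  have h_equi := mul_sum_filter_eq_of_sum_mul_addChar_eq hχ (S := univ) (w := 1) (f := g)
    (by simpa [walsh, traceChar_apply, g] using h) 0
  have h_split := card_filter_add_card_filter_not (s := univ) (fun x => g x = 0)
  simp only [Pi.one_apply, sum_const, nsmul_one, card_univ, eq_comm (a := (0 : ZMod p))] at h_equi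
  rw [card_univ] at h_split
  zify at h_split
  rw [h_wt]
  linear_combination p * h_split - h_equi

theorem wtC_codeword_fst_eq_zero (hχ : χ ≠ 1) {s : ℕ} (hq : Fintype.card F = (p * s) ^ 2)
    {z : F × F} (hz : z.1 = 0) (hz' : z.2 ≠ 0) :
    (wtC p F (codeword p f z) : ℤ) = (p - 1) * (p * s ^ 2) := by
  have h := prime_mul_wtC_codeword hχ (f := f) (z := z) (by rw [hz, zero_mul]) (R := 0) (k := 0) (by
    rw [← Prod.mk.eta (p := z), hz, walsh_zero_left f (isPrimitive_traceChar hχ), if_neg hz']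
    simp)
  rw [hq] at h
  refine mul_left_cancel₀ (Nat.cast_ne_zero.2 (NeZero.ne p)) (h.trans ?_)
  push_cast
  split_ifs <;> ring

end Codewords

section NaturalWeights

variable {p s : ℕ}

theorem le_mul_sq_self (hp : 2 ≤ p) : p * s ≤ p * s ^ 2 ∧ s ≤ p * s ^ 2 ∧
    s ≤ (p - 1) * (p * s ^ 2) := by
  have h_sq : p * s ≤ p * s ^ 2 := Nat.mul_le_mul_left p (Nat.le_self_pow two_ne_zero s)
  have h_le : s ≤ p * s ^ 2 := (Nat.le_mul_of_pos_left s (by omega)).trans h_sq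
  exact ⟨h_sq, h_le, h_le.trans (Nat.le_mul_of_pos_left _ (by omega))⟩

theorem cast_weights (hp : 2 ≤ p) :
    (((p - 1) * (p * s ^ 2 - s) : ℕ) : ℤ) = (p - 1) * (p * s ^ 2) - 1 * ((p - 1) * s) ∧
    (((p - 1) * (p * s ^ 2) - s : ℕ) : ℤ) = (p - 1) * (p * s ^ 2) + -1 * s ∧
    (((p - 1) * (p * s ^ 2) : ℕ) : ℤ) = (p - 1) * (p * s ^ 2) ∧
    (((p - 1) * (p * s ^ 2) + s : ℕ) : ℤ) = (p - 1) * (p * s ^ 2) + 1 * s ∧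
    (((p - 1) * (p * s ^ 2 + s) : ℕ) : ℤ) = (p - 1) * (p * s ^ 2) - -1 * ((p - 1) * s) := by
  obtain ⟨-, h_le, h_le'⟩ := le_mul_sq_self (s := s) hp
  push_cast [Nat.cast_sub h_le, Nat.cast_sub h_le', Nat.cast_pred (by omega : 0 < p)]
  refine ⟨?_, ?_, ?_, ?_, ?_⟩ <;> ring

theorem cast_frequencies (hp : 2 ≤ p) (hs : 0 < s) :
    ((((p * s) ^ 2 - 1) * (p * s ^ 2 + p * s - s) : ℕ) : ℤ)
      = ((p * s) ^ 2 - 1) * (p * s ^ 2 + 1 * ((p - 1) * s)) ∧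
    ((((p * s) ^ 2 - 1) * (p - 1) * (p * s ^ 2 + s) : ℕ) : ℤ)
      = ((p * s) ^ 2 - 1) * (p - 1) * (p * s ^ 2 - -1 * s) ∧
    ((((p * s) ^ 2 - 1) * (p - 1) * (p * s ^ 2 - s) : ℕ) : ℤ)
      = ((p * s) ^ 2 - 1) * (p - 1) * (p * s ^ 2 - 1 * s) ∧
    ((((p * s) ^ 2 - 1) * (p * s ^ 2 - p * s + s) : ℕ) : ℤ)
      = ((p * s) ^ 2 - 1) * (p * s ^ 2 + -1 * ((p - 1) * s)) := by
  obtain ⟨h_sq, h_le, -⟩ := le_mul_sq_self (s := s) hp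
  push_cast [Nat.cast_sub h_sq, Nat.cast_sub h_le, Nat.cast_sub (Nat.le_add_right_of_le h_le),
    Nat.cast_pred (by omega : 0 < p), Nat.cast_pred (by positivity : 0 < (p * s) ^ 2)]
  refine ⟨?_, ?_, ?_, ?_⟩ <;> ring

end NaturalWeights

section WeightDistribution

variable {p : ℕ} [Fact p.Prime] {K : Type*} [Field K] [CharZero K] {F : Type*} [Field F]
  [Fintype F] [DecidableEq F] [Algebra (ZMod p) F] {χ : AddChar (ZMod p) K} {f : F → F} {s : ℕ}
  {e : F × F → ℤ} {k : F × F → ZMod p}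

namespace IsBalancedSpectrum

theorem wtC_codeword (hB : IsBalancedSpectrum χ f s e k) (hχ : χ ≠ 1) (h0 : f 0 = 0)
    {z : F × F} (hz : z.1 ≠ 0) : (wtC p F (codeword p f z) : ℤ)
      = (p - 1) * (p * s ^ 2) + if k z = 0 then -(e z * ((p - 1) * s)) else e z * s := by
  have h := prime_mul_wtC_codeword hχ (f := f) (z := z) (by rw [h0, mul_zero])
    (R := e z * (p * s)) (k := k z) (by rw [hB.walsh_eq z hz]; push_cast; ring)
  rw [hB.card_eq] at h
  refine mul_left_cancel₀ (Nat.cast_ne_zero.2 (NeZero.ne p)) (h.trans ?_)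
  push_cast
  split_ifs <;> ring

theorem wtC_codeword_cases (hB : IsBalancedSpectrum χ f s e k) (hχ : χ ≠ 1) (h0 : f 0 = 0)
    (z : F × F) :
    z = 0 ∧ (wtC p F (codeword p f z) : ℤ) = 0 ∨
    (z.1 = 0 ∧ z.2 ≠ 0) ∧ (wtC p F (codeword p f z) : ℤ) = (p - 1) * (p * s ^ 2) ∨
    (z.1 ≠ 0 ∧ (e z = 1 ∨ e z = -1) ∧ k z = 0) ∧
      (wtC p F (codeword p f z) : ℤ) = (p - 1) * (p * s ^ 2) - e z * ((p - 1) * s) ∨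
    (z.1 ≠ 0 ∧ (e z = 1 ∨ e z = -1) ∧ k z ≠ 0) ∧
      (wtC p F (codeword p f z) : ℤ) = (p - 1) * (p * s ^ 2) + e z * s := by
  by_cases h_fst : z.1 = 0
  · by_cases h_snd : z.2 = 0
    · obtain rfl : z = 0 := Prod.ext h_fst h_snd
      exact .inl ⟨rfl, by rw [map_zero, wtC_eq_zero.2 rfl, Nat.cast_zero]⟩
    · exact .inr (.inl ⟨⟨h_fst, h_snd⟩, wtC_codeword_fst_eq_zero hχ hB.card_eq h_fst h_snd⟩)
  · have h_wt := hB.wtC_codeword hχ h0 h_fst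
    by_cases hk : k z = 0
    · rw [if_pos hk, ← sub_eq_add_neg] at h_wt
      exact .inr (.inr (.inl ⟨⟨h_fst, hB.sign z h_fst, hk⟩, h_wt⟩))
    · rw [if_neg hk] at h_wt
      exact .inr (.inr (.inr ⟨⟨h_fst, hB.sign z h_fst, hk⟩, h_wt⟩))

variable {δ : ℤ}

theorem wtC_codeword_eq_iff_eq_zero (hB : IsBalancedSpectrum χ f s e k) (hp : p ≠ 2) (hχ : χ ≠ 1)
    (h0 : f 0 = 0) (hδ : δ = 1 ∨ δ = -1) (z : F × F) :
    (wtC p F (codeword p f z) : ℤ) = (p - 1) * (p * s ^ 2) - δ * ((p - 1) * s) ↔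
      z.1 ≠ 0 ∧ e z = δ ∧ k z = 0 := by
  have h_lt := hB.lt_sub_one_mul hp
  have h_cases := hB.wtC_codeword_cases hχ h0 z
  generalize ((p : ℤ) - 1) * (p * s ^ 2) = A, ((p : ℤ) - 1) * s = B at *
  grind [Prod.fst_zero]

theorem wtC_codeword_eq_iff_ne_zero (hB : IsBalancedSpectrum χ f s e k) (hp : p ≠ 2) (hχ : χ ≠ 1)
    (h0 : f 0 = 0) (hδ : δ = 1 ∨ δ = -1) (z : F × F) :
    (wtC p F (codeword p f z) : ℤ) = (p - 1) * (p * s ^ 2) + δ * s ↔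
      z.1 ≠ 0 ∧ e z = δ ∧ k z ≠ 0 := by
  have h_lt := hB.lt_sub_one_mul hp
  have h_cases := hB.wtC_codeword_cases hχ h0 z
  generalize ((p : ℤ) - 1) * (p * s ^ 2) = A, ((p : ℤ) - 1) * s = B at *
  grind [Prod.fst_zero]

theorem wtC_codeword_eq_iff_fst_eq_zero (hB : IsBalancedSpectrum χ f s e k) (hp : p ≠ 2)
    (hχ : χ ≠ 1) (h0 : f 0 = 0) (z : F × F) :
    (wtC p F (codeword p f z) : ℤ) = (p - 1) * (p * s ^ 2) ↔ z.1 = 0 ∧ z.2 ≠ 0 := by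
  have h_lt := hB.lt_sub_one_mul hp
  have h_cases := hB.wtC_codeword_cases hχ h0 z
  generalize ((p : ℤ) - 1) * (p * s ^ 2) = A, ((p : ℤ) - 1) * s = B at *
  grind [Prod.fst_zero, Prod.snd_zero]

theorem le_wtC_codeword (hB : IsBalancedSpectrum χ f s e k) (hp : p ≠ 2) (hχ : χ ≠ 1)
    (h0 : f 0 = 0) {z : F × F} (hz : z ≠ 0) :
    ((p : ℤ) - 1) * (p * s ^ 2) - (p - 1) * s ≤ wtC p F (codeword p f z) := by
  have h_lt := hB.lt_sub_one_mul hp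
  have h_cases := hB.wtC_codeword_cases hχ h0 z
  generalize ((p : ℤ) - 1) * (p * s ^ 2) = A, ((p : ℤ) - 1) * s = B at *
  grind

theorem codeword_eq_zero (hB : IsBalancedSpectrum χ f s e k) (hp : p ≠ 2) (hχ : χ ≠ 1)
    (h0 : f 0 = 0) {z : F × F} (hz : codeword p f z = 0) : z = 0 := by
  by_contra h
  have h_le := hB.le_wtC_codeword hp hχ h0 h
  obtain ⟨h_pos, h_lt, h_lt'⟩ := hB.lt_sub_one_mul hp
  rw [wtC_eq_zero.2 hz, Nat.cast_zero] at h_le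
  linarith

theorem ACount_eq_card (hB : IsBalancedSpectrum χ f s e k) (hp : p ≠ 2) (hχ : χ ≠ 1)
    (h0 : f 0 = 0) (i : ℕ) : ACount p F f i = #{z | (wtC p F (codeword p f z) : ℤ) = i} := by
  rw [ACount_eq_card_codeword fun z => hB.codeword_eq_zero hp hχ h0]
  simp only [Nat.cast_inj]

theorem two_mul_ACount_sub (hB : IsBalancedSpectrum χ f s e k) (hp : p ≠ 2) (hχ : χ ≠ 1)
    (h0 : f 0 = 0) (hneg : ∀ x, x ≠ 0 → f (-x) ≠ -f x) (hδ : δ = 1 ∨ δ = -1) {i : ℕ}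
    (hi : (i : ℤ) = (p - 1) * (p * s ^ 2) - δ * ((p - 1) * s)) :
    2 * (ACount p F f i : ℤ) = ((p * s) ^ 2 - 1) * (p * s ^ 2 + δ * ((p - 1) * s)) := by
  rw [hB.ACount_eq_card hp hχ h0, hi, ← hB.two_mul_card_eq_zero hp hχ h0 hneg hδ]
  simp only [hB.wtC_codeword_eq_iff_eq_zero hp hχ h0 hδ]

theorem two_mul_ACount_add (hB : IsBalancedSpectrum χ f s e k) (hp : p ≠ 2) (hχ : χ ≠ 1)
    (h0 : f 0 = 0) (hneg : ∀ x, x ≠ 0 → f (-x) ≠ -f x) (hδ : δ = 1 ∨ δ = -1) {i : ℕ}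
    (hi : (i : ℤ) = (p - 1) * (p * s ^ 2) + δ * s) :
    2 * (ACount p F f i : ℤ) = ((p * s) ^ 2 - 1) * (p - 1) * (p * s ^ 2 - δ * s) := by
  rw [hB.ACount_eq_card hp hχ h0, hi, ← hB.two_mul_card_ne_zero hp hχ h0 hneg hδ]
  simp only [hB.wtC_codeword_eq_iff_ne_zero hp hχ h0 hδ]

theorem ACount_mid (hB : IsBalancedSpectrum χ f s e k) (hp : p ≠ 2) (hχ : χ ≠ 1)
    (h0 : f 0 = 0) {i : ℕ} (hi : (i : ℤ) = (p - 1) * (p * s ^ 2)) :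
    ACount p F f i = (p * s) ^ 2 - 1 := by
  have h_prod : ({z | z.1 = 0 ∧ z.2 ≠ 0} : Finset (F × F)) =
      ({0} : Finset F) ×ˢ (univ.erase (0 : F)) := by
    ext ⟨a, b⟩
    simp only [mem_filter_univ, mem_product, mem_singleton, mem_erase, mem_univ, and_true]
  rw [hB.ACount_eq_card hp hχ h0, hi]
  simp only [hB.wtC_codeword_eq_iff_fst_eq_zero hp hχ h0]
  rw [h_prod, card_product, card_singleton, one_mul, card_erase_of_mem (mem_univ _), card_univ,
    hB.card_eq]

theorem ACount_zero (hB : IsBalancedSpectrum χ f s e k) (hp : p ≠ 2) (hχ : χ ≠ 1)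
    (h0 : f 0 = 0) : ACount p F f 0 = 1 := by
  rw [ACount_eq_card_codeword fun z => hB.codeword_eq_zero hp hχ h0, card_eq_one]
  refine ⟨0, ?_⟩
  ext z
  rw [mem_filter_univ, mem_singleton, wtC_eq_zero]
  exact ⟨hB.codeword_eq_zero hp hχ h0, by rintro rfl; exact map_zero _⟩

theorem ACount_eq_zero (hB : IsBalancedSpectrum χ f s e k) (hp : p ≠ 2) (hχ : χ ≠ 1)
    (h0 : f 0 = 0) {i : ℕ} (hi : i ∉ ({0, (p - 1) * (p * s ^ 2 - s), (p - 1) * (p * s ^ 2) - s,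
      (p - 1) * (p * s ^ 2), (p - 1) * (p * s ^ 2) + s, (p - 1) * (p * s ^ 2 + s)} : Set ℕ)) :
    ACount p F f i = 0 := by
  obtain ⟨h₁, h₂, h₃, h₄, h₅⟩ := cast_weights (s := s) (Fact.out : p.Prime).two_le
  simp only [Set.mem_insert_iff, Set.mem_singleton_iff, ← Nat.cast_inj (R := ℤ), h₁, h₂, h₃, h₄,
    h₅] at hi
  rw [hB.ACount_eq_card hp hχ h0, card_eq_zero]
  refine filter_eq_empty_iff.2 fun z _ hz => ?_
  have h_cases := hB.wtC_codeword_cases hχ h0 z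
  rw [hz] at h_cases
  clear h₁ h₂ h₃ h₄ h₅
  generalize ((p : ℤ) - 1) * (p * s ^ 2) = A, ((p : ℤ) - 1) * s = B at *
  grind

theorem le_wtC (hB : IsBalancedSpectrum χ f s e k) (hp : p ≠ 2) (hχ : χ ≠ 1) (h0 : f 0 = 0)
    {g : {x : F // x ≠ 0} → ZMod p} (hg : g ∈ CCode p F f) (hg0 : g ≠ 0) :
    (p - 1) * (p * s ^ 2 - s) ≤ wtC p F g := by
  rw [CCode_eq_range_codeword] at hg
  obtain ⟨z, rfl⟩ := hg
  have h_le := hB.le_wtC_codeword hp hχ h0 (z := z) (by rintro rfl; exact hg0 (map_zero _))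
  rwa [← one_mul (((p : ℤ) - 1) * s), ← (cast_weights (Fact.out : p.Prime).two_le).1,
    Nat.cast_le] at h_le

theorem ACount_weights (hB : IsBalancedSpectrum χ f s e k) (hp : p ≠ 2) (hχ : χ ≠ 1)
    (h0 : f 0 = 0) (hneg : ∀ x, x ≠ 0 → f (-x) ≠ -f x) :
    ACount p F f ((p - 1) * (p * s ^ 2 - s)) = ((p * s) ^ 2 - 1) * (p * s ^ 2 + p * s - s) / 2 ∧
    ACount p F f ((p - 1) * (p * s ^ 2) - s) = ((p * s) ^ 2 - 1) * (p - 1) * (p * s ^ 2 + s) / 2 ∧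
    ACount p F f ((p - 1) * (p * s ^ 2)) = (p * s) ^ 2 - 1 ∧
    ACount p F f ((p - 1) * (p * s ^ 2) + s) = ((p * s) ^ 2 - 1) * (p - 1) * (p * s ^ 2 - s) / 2 ∧
    ACount p F f ((p - 1) * (p * s ^ 2 + s))
      = ((p * s) ^ 2 - 1) * (p * s ^ 2 - p * s + s) / 2 := by
  have hp2 : 2 ≤ p := (Fact.out : p.Prime).two_le
  have h_half {A N : ℕ} {n : ℤ} (hA : 2 * (A : ℤ) = n) (hN : (N : ℤ) = n) : A = N / 2 := by omega
  obtain ⟨w₁, w₂, w₃, w₄, w₅⟩ := cast_weights (s := s) hp2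
  obtain ⟨n₁, n₂, n₄, n₅⟩ := cast_frequencies hp2 hB.pos
  exact ⟨h_half (hB.two_mul_ACount_sub hp hχ h0 hneg (.inl rfl) w₁) n₁,
    h_half (hB.two_mul_ACount_add hp hχ h0 hneg (.inr rfl) w₂) n₂,
    hB.ACount_mid hp hχ h0 w₃,
    h_half (hB.two_mul_ACount_add hp hχ h0 hneg (.inl rfl) w₄) n₄,
    h_half (hB.two_mul_ACount_sub hp hχ h0 hneg (.inr rfl) w₅) n₅⟩

end IsBalancedSpectrum

end WeightDistribution

theorem ofReal_sqrt_pow {p m : ℕ} (hm : Even m) : (√((p : ℝ) ^ m) : ℂ) = (p : ℂ) ^ (m / 2) := by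
  obtain ⟨t, rfl⟩ := hm.two_dvd
  rw [mul_comm, pow_mul, Real.sqrt_sq (by positivity), Nat.mul_div_cancel _ two_pos]
  push_cast
  rfl

theorem exists_isBalancedSpectrum {p t : ℕ} [Fact p.Prime] {K : Type*} [Field K] [CharZero K]
    {F : Type*} [Field F] [Fintype F] [DecidableEq F] [Algebra (ZMod p) F]
    (hF : Fintype.card F = p ^ (2 * (t + 1))) {ξ : K} (hξ : IsPrimitiveRoot ξ p) {Pl : F → F}
    (h0 : Pl 0 = 0)
    (hcond : p = 3 ∧ IsPerfectNonlinear Pl ∨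
      ((∀ x : F, Pl x = 0 → x = 0) ∧
        ∃ (ε : F → ℤ) (D : F → F → ZMod p),
          (∀ a : F, a ≠ 0 → (ε a = 1 ∨ ε a = -1) ∧
            ∀ y : F, ∑ x : F,
                ξ ^ (Algebra.trace (ZMod p) F (a * Pl x)
                  + Algebra.trace (ZMod p) F (y * x)).val
              = (ε a : K) * ξ ^ (D a y).val * p ^ (t + 1)) ∧
          ∃ r : ZMod p, ∀ a : F, a ≠ 0 → D a 0 ≠ r)) :
    ∃ χ : AddChar (ZMod p) K, χ ≠ 1 ∧ ∃ e k, IsBalancedSpectrum χ Pl (p ^ t) e k := by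
  let χ : AddChar (ZMod p) K := AddChar.zmodChar p hξ.pow_eq_one
  have hχ : χ ≠ 1 := by
    intro h
    have h_one : χ (1 : ZMod p) = ξ := by
      rw [AddChar.zmodChar_apply, ZMod.val_one, pow_one]
    exact hξ.ne_one (Fact.out : p.Prime).one_lt (by rw [← h_one, h, AddChar.one_apply])
  refine ⟨χ, hχ, ?_⟩
  rcases hcond with ⟨rfl, hf⟩ | ⟨h_zero, ε, D, h_walsh, r, hr⟩
  · exact hf.exists_isBalancedSpectrum_of_three hχ (hF.trans (pow_mul 3 2 (t + 1)))
  · refine ⟨_, _, isBalancedSpectrum_of_weaklyRegular hχ (by rw [hF]; ring) h0 h_zero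
      (fun a ha => (h_walsh a ha).1) (fun a ha b => ?_) hr⟩
    rw [Nat.cast_pow, ← pow_succ', AddChar.zmodChar_apply, ← (h_walsh a ha).2 b]
    simp only [walsh, traceChar_apply, map_add, χ, AddChar.zmodChar_apply]

theorem stmt_15_general (p m : ℕ) [Fact p.Prime] (hp : Odd p) (hm : Even m) (hm0 : 0 < m)
    {K : Type*} [Field K] [CharZero K]
    (F : Type*) [Field F] [Fintype F] [DecidableEq F] [Algebra (ZMod p) F]
    (hF : Fintype.card F = p ^ m)
    (ξ : K) (hξ : IsPrimitiveRoot ξ p)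
    (Pl : F → F)
    (h0 : Pl 0 = 0)
    (hneg : ∀ x : F, x ≠ 0 → Pl (-x) ≠ -Pl x)
    (hcond : p = 3 ∧ IsPerfectNonlinear Pl ∨
      ((∀ x : F, Pl x = 0 → x = 0) ∧
        ∃ (ε : F → ℤ) (D : F → F → ZMod p),
          (∀ a : F, a ≠ 0 → (ε a = 1 ∨ ε a = -1) ∧
            ∀ y : F, ∑ x : F,
                ξ ^ (Algebra.trace (ZMod p) F (a * Pl x)
                  + Algebra.trace (ZMod p) F (y * x)).val
              = (ε a : K) * ξ ^ (D a y).val * p ^ (m / 2)) ∧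
          ∃ r : ZMod p, ∀ a : F, a ≠ 0 → D a 0 ≠ r)) :
    ACount p F Pl 0 = 1 ∧
    ACount p F Pl ((p - 1) * (p ^ (m - 1) - p ^ (m / 2 - 1)))
      = (p ^ m - 1) * (p ^ (m - 1) + p ^ (m / 2) - p ^ (m / 2 - 1)) / 2 ∧
    ACount p F Pl ((p - 1) * p ^ (m - 1) - p ^ (m / 2 - 1))
      = (p ^ m - 1) * (p - 1) * (p ^ (m - 1) + p ^ (m / 2 - 1)) / 2 ∧
    ACount p F Pl ((p - 1) * p ^ (m - 1)) = p ^ m - 1 ∧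
    ACount p F Pl ((p - 1) * p ^ (m - 1) + p ^ (m / 2 - 1))
      = (p ^ m - 1) * (p - 1) * (p ^ (m - 1) - p ^ (m / 2 - 1)) / 2 ∧
    ACount p F Pl ((p - 1) * (p ^ (m - 1) + p ^ (m / 2 - 1)))
      = (p ^ m - 1) * (p ^ (m - 1) - p ^ (m / 2) + p ^ (m / 2 - 1)) / 2 ∧
    (∀ i : ℕ, i ∉ ({0, (p - 1) * (p ^ (m - 1) - p ^ (m / 2 - 1)),
        (p - 1) * p ^ (m - 1) - p ^ (m / 2 - 1), (p - 1) * p ^ (m - 1),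
        (p - 1) * p ^ (m - 1) + p ^ (m / 2 - 1),
        (p - 1) * (p ^ (m - 1) + p ^ (m / 2 - 1))} : Set ℕ) →
      ACount p F Pl i = 0) ∧
    (∀ g ∈ CCode p F Pl, g ≠ 0 →
      (p - 1) * (p ^ (m - 1) - p ^ (m / 2 - 1)) ≤ wtC p F g) := by
  obtain ⟨t, rfl⟩ : ∃ t, m = 2 * (t + 1) := ⟨m / 2 - 1, by have := hm.two_dvd; omega⟩
  have h_half : 2 * (t + 1) / 2 = t + 1 := Nat.mul_div_cancel_left _ two_pos
  have hp2 : p ≠ 2 := by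
    rintro rfl
    exact absurd hp (by decide)
  rw [h_half] at hcond ⊢
  obtain ⟨χ, hχ, e, k, hB⟩ := exists_isBalancedSpectrum hF hξ h0 hcond
  have h_pow : p ^ (2 * (t + 1)) = (p * p ^ t) ^ 2 := by ring
  have h_pow_pred : p ^ (2 * (t + 1) - 1) = p * (p ^ t) ^ 2 := by
    rw [show 2 * (t + 1) - 1 = 1 + t * 2 by omega, pow_add, pow_mul, pow_one]
  rw [h_pow, h_pow_pred, pow_succ' p t, Nat.add_sub_cancel]
  obtain ⟨h₁, h₂, h₃, h₄, h₅⟩ := hB.ACount_weights hp2 hχ h0 hneg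
  exact ⟨hB.ACount_zero hp2 hχ h0, h₁, h₂, h₃, h₄, h₅,
    fun i hi => hB.ACount_eq_zero hp2 hχ h0 hi, fun g hg hg0 => hB.le_wtC hp2 hχ h0 hg hg0⟩

/-- the weight distribution of `C_Π` for `m` even, `Π` perfect nonlinear with
`Π(0) = 0`, `Π(cx) ≠ cΠ(x)` for `x ≠ 0`, `c ∈ 𝔽_p \ {0,1}`, assuming `p = 3` or
(`Π⁻¹(0) = {0}`, `Π` weakly regular perfect nonlinear, and `a ↦ Π_a*(0)` not surjective);
`C_Π` is a 5-weight code with minimum distance `(p-1)(p^{m-1} - p^{m/2-1})`. -/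
theorem stmt_15 (p m : ℕ) [Fact p.Prime] (hp : Odd p) (hm : Even m) (hm0 : 0 < m)
    (F : Type*) [Field F] [Fintype F] [DecidableEq F] [Algebra (ZMod p) F]
    (hF : Fintype.card F = p ^ m)
    (ξ : ℂ) (hξ : IsPrimitiveRoot ξ p)
    (Pl : F → F)
    (hPN : ∀ a : F, a ≠ 0 → Function.Bijective (fun x : F => Pl (x + a) - Pl x))
    (h0 : Pl 0 = 0)
    (hhom : ∀ x : F, x ≠ 0 → ∀ c : ZMod p, c ≠ 0 → c ≠ 1 →
      Pl (algebraMap (ZMod p) F c * x) ≠ algebraMap (ZMod p) F c * Pl x)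
    (hcond : p = 3 ∨
      ((∀ x : F, Pl x = 0 → x = 0) ∧
        ∃ (ε : F → ℤ) (D : F → F → ZMod p),
          (∀ a : F, a ≠ 0 → (ε a = 1 ∨ ε a = -1) ∧
            ∀ y : F, ∑ x : F,
                ξ ^ (Algebra.trace (ZMod p) F (a * Pl x)
                  + Algebra.trace (ZMod p) F (y * x)).val
              = (ε a : ℂ) * ξ ^ (D a y).val * Real.sqrt (p ^ m)) ∧
          ∃ r : ZMod p, ∀ a : F, a ≠ 0 → D a 0 ≠ r)) :
    ACount p F Pl 0 = 1 ∧
    ACount p F Pl ((p - 1) * (p ^ (m - 1) - p ^ (m / 2 - 1)))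
      = (p ^ m - 1) * (p ^ (m - 1) + p ^ (m / 2) - p ^ (m / 2 - 1)) / 2 ∧
    ACount p F Pl ((p - 1) * p ^ (m - 1) - p ^ (m / 2 - 1))
      = (p ^ m - 1) * (p - 1) * (p ^ (m - 1) + p ^ (m / 2 - 1)) / 2 ∧
    ACount p F Pl ((p - 1) * p ^ (m - 1)) = p ^ m - 1 ∧
    ACount p F Pl ((p - 1) * p ^ (m - 1) + p ^ (m / 2 - 1))
      = (p ^ m - 1) * (p - 1) * (p ^ (m - 1) - p ^ (m / 2 - 1)) / 2 ∧
    ACount p F Pl ((p - 1) * (p ^ (m - 1) + p ^ (m / 2 - 1)))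
      = (p ^ m - 1) * (p ^ (m - 1) - p ^ (m / 2) + p ^ (m / 2 - 1)) / 2 ∧
    (∀ i : ℕ, i ∉ ({0, (p - 1) * (p ^ (m - 1) - p ^ (m / 2 - 1)),
        (p - 1) * p ^ (m - 1) - p ^ (m / 2 - 1), (p - 1) * p ^ (m - 1),
        (p - 1) * p ^ (m - 1) + p ^ (m / 2 - 1),
        (p - 1) * (p ^ (m - 1) + p ^ (m / 2 - 1))} : Set ℕ) →
      ACount p F Pl i = 0) ∧
    (∀ g ∈ CCode p F Pl, g ≠ 0 →
      (p - 1) * (p ^ (m - 1) - p ^ (m / 2 - 1)) ≤ wtC p F g) := by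
  have h_two_lt : Fact (2 < p) :=
    ⟨(Fact.out : p.Prime).two_le.lt_of_ne' fun h => absurd (h ▸ hp) (by decide)⟩
  exact stmt_15_general p m hp hm hm0 F hF ξ hξ Pl h0
    (fun x hx => by simpa using hhom x hx (-1) (neg_ne_zero.2 one_ne_zero) ZMod.neg_one_ne_one)
    (by simpa only [ofReal_sqrt_pow hm] using hcond.imp_left fun h => ⟨h, hPN⟩)
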